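/- arXiv:2512.10085 — 4 statements merged into one kernel-verified Lean document; each statement's English description precedes it below -/
import Mathlib

section
/- Let q ≥ 3 be an integer and d > 0 a real number. Then the polynomial a_p(z) = z^q − z^{q−1} − d has a complex root z1 whose principal argument β1 = arg(z1) satisfies π/(q−1) < β1 ≤ 2π/q, and whose modulus satisfies |z1| ≤ (d/sin(π/(q−1)))^{1/(q−1)}. -/
open Real

theorem sharproots_aux (n : ℕ) (hn : 2 ≤ n) (d : ℝ) (hd : 0 < d) :
    ∃ z1 : ℂ, z1 ^ (n + 1) - z1 ^ n - (d : ℂ) = 0 ∧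
      π / n < Complex.arg z1 ∧ Complex.arg z1 ≤ 2 * π / (n + 1) ∧
      ‖z1‖ ≤ (d / Real.sin (π / n)) ^ ((1 : ℝ) / n) := by
  have hn2 : (2 : ℝ) ≤ n := by exact_mod_cast hn
  have hn0 : (0 : ℝ) < n := by linarith
  have hn1 : (0 : ℝ) < n + 1 := by linarith
  have hpi := Real.pi_pos
  set a : ℝ := π / n with ha
  set b : ℝ := 2 * π / (n + 1) with hb
  have han : n * a = π := by rw [ha]; field_simp
  have hbn : (n + 1) * b = 2 * π := by rw [hb]; field_simp
  have ha0 : 0 < a := by positivity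
  have hb0 : 0 < b := by positivity
  have hab : a < b := by
    rw [ha, hb, div_lt_div_iff₀ hn0 hn1]; nlinarith
  have ha2 : a ≤ π / 2 := by
    nlinarith
  have hbpi : b < π := by nlinarith
  have hsa : 0 < sin a := sin_pos_of_pos_of_lt_pi ha0 (by linarith)
  have hsb : 0 < sin b := sin_pos_of_pos_of_lt_pi hb0 hbpi
  let F : ℝ → ℝ := fun t => (-sin (n * t)) ^ n * sin t - d * (-sin ((n + 1) * t)) ^ (n + 1)
  have hFc : ContinuousOn F (Set.Icc a b) := by
    apply Continuous.continuousOn; fun_prop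
  have hFa : F a < 0 := by
    have h1 : (n + 1) * a = a + π := by linarith
    simp only [F]
    rw [h1, han, sin_pi, sin_add_pi, neg_zero, zero_pow (by omega), neg_neg]
    have : 0 < d * sin a ^ (n + 1) := by positivity
    linarith
  have hFb : 0 < F b := by
    have h1 : n * b = 2 * π - b := by linarith
    simp only [F]
    rw [h1, hbn, sin_two_pi, sin_two_pi_sub, neg_zero, zero_pow (by omega), neg_neg]
    have : 0 < sin b ^ n * sin b := by positivity
    linarith
  obtain ⟨t, ⟨hat, htb⟩, hFt⟩ := intermediate_value_Ioo hab.le hFc ⟨hFa, hFb⟩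
  have hst : 0 < sin t := sin_pos_of_pos_of_lt_pi (by linarith) (by linarith)
  have hs1 : 0 < -sin (n * t) := by
    rw [← sin_sub_pi]
    apply sin_pos_of_pos_of_lt_pi <;> nlinarith
  have hs2 : 0 < -sin ((n + 1) * t) := by
    rw [← sin_sub_pi]
    apply sin_pos_of_pos_of_lt_pi <;> nlinarith
  have hsat : sin a ≤ sin t ∨ n = 2 := by
    rcases Nat.lt_or_ge 2 n with h | h
    · left
      have h3 : (3 : ℝ) ≤ n := by exact_mod_cast h
      exact sin_le_sin_of_le_of_le_pi_div_two (by linarith) (by nlinarith) hat.le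
    · right; omega
  have hkey : -sin ((n + 1) * t) * sin a ≤ sin t := by
    rcases hsat with h | h
    · nlinarith [neg_one_le_sin ((n + 1) * t)]
    · have e : ((n : ℝ) + 1) * t = 3 * t := by rw [h]; norm_num
      have e2 : a = π / 2 := by rw [ha, h]; norm_num
      rw [e, e2, sin_three_mul, sin_pi_div_two]
      nlinarith [sin_le_one t, mul_nonneg hst.le (sub_nonneg.2 (sin_sq_le_one t))]
  set s1 := -sin (n * t) with hs1d
  set s2 := -sin ((n + 1) * t) with hs2d
  have hF : s1 ^ n * sin t = d * s2 ^ (n + 1) := by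
    have : s1 ^ n * sin t - d * s2 ^ (n + 1) = 0 := hFt
    linarith
  set r := s1 / s2 with hr
  have hr0 : 0 < r := div_pos hs1 hs2
  have hrn : r ^ n * sin t = d * s2 := by
    rw [hr, div_pow, div_mul_eq_mul_div, hF, pow_succ]; field_simp
  have him : r * sin ((n + 1) * t) = sin (n * t) := by
    have : r * s2 = s1 := by rw [hr]; field_simp
    linarith
  have hre : (r * cos ((n + 1) * t) - cos (n * t)) * s2 = sin t := by
    have h1 : r * s2 = s1 := by rw [hr]; field_simp
    have h2 : sin t = sin ((n + 1) * t) * cos (n * t) - cos ((n + 1) * t) * sin (n * t) := by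
      rw [← sin_sub]; congr 1; ring
    rw [h2]
    linear_combination cos ((n + 1) * t) * h1
  have hre2 : r ^ n * (r * cos ((n + 1) * t) - cos (n * t)) = d := by
    apply mul_right_cancel₀ hs2.ne'
    rw [mul_assoc, hre, hrn]
  have harg : Complex.arg (r * (Complex.cos t + Complex.sin t * Complex.I)) = t :=
    Complex.arg_mul_cos_add_sin_mul_I hr0 ⟨by linarith, by linarith⟩
  refine ⟨r * (Complex.cos t + Complex.sin t * Complex.I), ?_, ?_, ?_, ?_⟩
  · rw [mul_pow, mul_pow, Complex.cos_add_sin_mul_I_pow, Complex.cos_add_sin_mul_I_pow]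
    have e1 := congrArg (fun x : ℝ => (x : ℂ)) him
    have e2 := congrArg (fun x : ℝ => (x : ℂ)) hre2
    push_cast at e1 e2 ⊢
    linear_combination e2 + (r : ℂ) ^ n * Complex.I * e1
  · rw [harg]; exact hat
  · rw [harg]; exact htb.le
  · have hnorm : ‖(r * (Complex.cos t + Complex.sin t * Complex.I) : ℂ)‖ = r := by
      rw [norm_mul, Complex.norm_cos_add_sin_mul_I, Complex.norm_real, mul_one, norm_of_nonneg hr0.le]
    rw [hnorm]
    have hle : r ^ n ≤ d / sin a := by
      rw [le_div_iff₀ hsa]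
      apply le_of_mul_le_mul_right _ hst
      calc r ^ n * sin a * sin t = d * (s2 * sin a) := by linear_combination sin a * hrn
        _ ≤ d * sin t := by gcongr
    calc r = (r ^ n) ^ ((1 : ℝ) / n) := by
          rw [one_div, Real.pow_rpow_inv_natCast hr0.le (by omega)]
      _ ≤ _ := by gcongr

theorem sharproots (q : ℕ) (hq : 3 ≤ q) (d : ℝ) (hd : 0 < d) :
    ∃ z1 : ℂ, z1 ^ q - z1 ^ (q - 1) - (d : ℂ) = 0 ∧
      π / (q - 1 : ℝ) < Complex.arg z1 ∧ Complex.arg z1 ≤ 2 * π / q ∧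
      ‖z1‖ ≤ (d / Real.sin (π / (q - 1 : ℝ))) ^ ((1 : ℝ) / (q - 1 : ℝ)) := by
  obtain ⟨n, rfl⟩ : ∃ n, q = n + 1 := ⟨q - 1, by omega⟩
  have h := sharproots_aux n (by omega) d hd
  simpa only [Nat.add_sub_cancel, Nat.cast_add, Nat.cast_one, add_sub_cancel_right] using h
end

section
/- Let q ≥ 3 be an integer and d > 0 a real number. Then every complex root z of the polynomial a_p(z) = z^q − z^{q−1} − d with 0 < arg(z) ≤ π satisfies |z| ≤ (d/sin(π/(q−1)))^{1/(q−1)}. -/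
open Real

theorem secondary_roots_bound (q : ℕ) (hq : 3 ≤ q) (d : ℝ) (hd : 0 < d)
    (z : ℂ) (hz : z ^ q - z ^ (q - 1) - (d : ℂ) = 0)
    (harg1 : 0 < Complex.arg z) (harg2 : Complex.arg z ≤ π) :
    ‖z‖ ≤ (d / Real.sin (π / (q - 1 : ℝ))) ^ ((1 : ℝ) / (q - 1 : ℝ)) := by
  obtain ⟨n, rfl⟩ : ∃ n, q = n + 1 := ⟨q - 1, by omega⟩
  have hn : 2 ≤ n := by omega
  have hnR : (2 : ℝ) ≤ n := by exact_mod_cast hn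
  have hn0 : (0 : ℝ) < n := by linarith
  have e1 : (((n + 1 : ℕ) : ℝ) - 1) = n := by push_cast; ring
  rw [e1]
  simp only [Nat.add_sub_cancel] at hz
  have hz' : z ^ n * (z - 1) = (d : ℂ) := by
    linear_combination hz
  have hz0 : z ≠ 0 := by
    rintro rfl
    simp at harg1
  have hr : 0 < ‖z‖ := norm_pos_iff.mpr hz0
  have hre : z.re = ‖z‖ * Real.cos z.arg := (Complex.norm_mul_cos_arg z).symm
  have him : z.im = ‖z‖ * Real.sin z.arg := (Complex.norm_mul_sin_arg z).symm
  have hpi := Real.pi_pos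
  have hpn : 0 < π / n := by positivity
  have hpn2 : π / n ≤ π / 2 := by gcongr
  have hpow : (z ^ n).im = ‖z‖ ^ n * Real.sin (n * z.arg) := by
    conv_lhs => rw [← Complex.norm_mul_exp_arg_mul_I z]
    rw [mul_pow, ← Complex.exp_nat_mul, ← Complex.ofReal_pow, Complex.im_ofReal_mul]
    congr 1
    rw [← mul_assoc, ← Complex.ofReal_natCast, ← Complex.ofReal_mul, Complex.exp_ofReal_mul_I_im]
  have hθ : π / n ≤ z.arg := by
    by_contra hlt
    push Not at hlt
    have h1 : z.arg * n < π := (lt_div_iff₀ hn0).mp hlt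
    have hb : 0 < (z ^ n).im := by
      rw [hpow]
      exact mul_pos (pow_pos hr n) (Real.sin_pos_of_pos_of_lt_pi (by positivity) (by linarith))
    have hy : 0 < z.im := by
      rw [him]
      exact mul_pos hr (Real.sin_pos_of_pos_of_lt_pi harg1 (by linarith))
    have hR := congrArg Complex.re hz'
    have hI := congrArg Complex.im hz'
    simp only [Complex.mul_re, Complex.mul_im, Complex.sub_re, Complex.sub_im, Complex.one_re,
      Complex.one_im, Complex.ofReal_re, Complex.ofReal_im, sub_zero] at hR hI
    have h2 : d * z.im = -((z ^ n).im * ((z.re - 1) ^ 2 + z.im ^ 2)) := by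
      linear_combination (-z.im) * hR + (z.re - 1) * hI
    have h3 : 0 < d * z.im := mul_pos hd hy
    have h4 : 0 ≤ (z ^ n).im * ((z.re - 1) ^ 2 + z.im ^ 2) := by positivity
    linarith
  have hcos : Real.cos z.arg ≤ Real.cos (π / n) :=
    Real.cos_le_cos_of_nonneg_of_le_pi hpn.le harg2 hθ
  have hs : 0 < Real.sin (π / n) := Real.sin_pos_of_pos_of_lt_pi hpn (by linarith)
  have hsn : Real.sin (π / n) ≤ ‖z - 1‖ := by
    refine (sq_le_sq₀ hs.le (norm_nonneg _)).mp ?_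
    rw [← Complex.normSq_eq_norm_sq, Complex.normSq_apply]
    simp only [Complex.sub_re, Complex.sub_im, Complex.one_re, Complex.one_im, sub_zero]
    rw [hre, him]
    have t1 := Real.sin_sq_add_cos_sq z.arg
    have t2 := Real.sin_sq_add_cos_sq (π / n)
    have t3 := mul_le_mul_of_nonneg_left hcos hr.le
    have t4 := sq_nonneg (‖z‖ - Real.cos (π / n))
    have t5 : (‖z‖ * Real.cos z.arg - 1) * (‖z‖ * Real.cos z.arg - 1)
        + ‖z‖ * Real.sin z.arg * (‖z‖ * Real.sin z.arg)
        = ‖z‖ ^ 2 - 2 * (‖z‖ * Real.cos z.arg) + 1 := by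
      linear_combination ‖z‖ ^ 2 * t1
    rw [t5]
    nlinarith
  have hnorm : ‖z‖ ^ n * ‖z - 1‖ = d := by
    rw [← norm_pow, ← norm_mul, hz', Complex.norm_real, Real.norm_of_nonneg hd.le]
  have hle : ‖z‖ ^ n ≤ d / Real.sin (π / n) := by
    rw [le_div_iff₀ hs, ← hnorm]
    gcongr
  calc ‖z‖ = (‖z‖ ^ n) ^ ((1 : ℝ) / n) := by
        rw [one_div, Real.pow_rpow_inv_natCast hr.le (by omega)]
    _ ≤ _ := by gcongr
end

section
/- Let q ≥ 2 be an integer and d > 0 a real number. Suppose z' and z'' are complex roots of the polynomial a_p(z) = z^q − z^{q−1} − d with 0 ≤ arg(z') < arg(z'') ≤ π. Then |z''| < |z'|. -/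
open Real

lemma sec_mono (m : ℕ) (c : ℝ)
    (h : c ≤ 0 ∨ (2 * ((m : ℝ) + 1) + 1) ^ 2 * c ^ 2 ≤ 4 * (m + 1) * (m + 2)) :
    MonotoneOn (fun x : ℝ => x ^ (2 * m + 2) * (x ^ 2 - 2 * x * c + 1)) (Set.Ici 0) := by
  have hder : ∀ x : ℝ, HasDerivAt (fun x : ℝ => x ^ (2 * m + 2) * (x ^ 2 - 2 * x * c + 1))
      (((2 * m + 2 : ℕ) : ℝ) * x ^ (2 * m + 1) * (x ^ 2 - 2 * x * c + 1)
        + x ^ (2 * m + 2) * (2 * x - 2 * c)) x := by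
    intro x
    have h1 : HasDerivAt (fun x : ℝ => x ^ (2 * m + 2))
        (((2 * m + 2 : ℕ) : ℝ) * x ^ (2 * m + 1)) x := by
      simpa using hasDerivAt_pow (2 * m + 2) x
    have h2 : HasDerivAt (fun x : ℝ => x ^ 2 - 2 * x * c + 1) (2 * x - 2 * c) x := by
      have := (((hasDerivAt_pow 2 x).sub (((hasDerivAt_id x).const_mul 2).mul_const c)).add_const 1)
      refine this.congr_deriv ?_
      norm_num
    exact h1.mul h2
  apply monotoneOn_of_deriv_nonneg (convex_Ici 0)
  · exact fun x _ => (hder x).continuousAt.continuousWithinAt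
  · exact fun x _ => (hder x).differentiableAt.differentiableWithinAt
  · intro x hx
    rw [interior_Ici] at hx
    have hx0 : 0 < x := hx
    rw [(hder x).deriv]
    have hm : (0 : ℝ) ≤ m := Nat.cast_nonneg m
    have hQ : 0 ≤ ((m : ℝ) + 2) * x ^ 2 - (2 * (m + 1) + 1) * c * x + (m + 1) := by
      rcases h with h | h
      · have : 0 ≤ (2 * ((m : ℝ) + 1) + 1) * (-c) * x :=
          mul_nonneg (mul_nonneg (by positivity) (by linarith)) hx0.le
        have h2 : 0 ≤ ((m : ℝ) + 2) * x ^ 2 := by positivity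
        linarith
      · have h4 : 0 ≤ (4 * ((m : ℝ) + 2)) *
            (((m : ℝ) + 2) * x ^ 2 - (2 * (m + 1) + 1) * c * x + (m + 1)) := by
          nlinarith [sq_nonneg (2 * ((m : ℝ) + 2) * x - (2 * (m + 1) + 1) * c)]
        exact nonneg_of_mul_nonneg_right h4 (by positivity)
    have := mul_nonneg (pow_nonneg hx0.le (2 * m + 1)) hQ
    push_cast
    have e : (2 * (m : ℝ) + 2) * x ^ (2 * m + 1) * (x ^ 2 - 2 * x * c + 1)
        + x ^ (2 * m + 2) * (2 * x - 2 * c) = 2 * (x ^ (2 * m + 1) *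
        (((m : ℝ) + 2) * x ^ 2 - (2 * (m + 1) + 1) * c * x + (m + 1))) := by ring
    rw [e]; linarith

lemma sec_val (m : ℕ) (d : ℝ) (z : ℂ) (h : z ^ (m + 1) * (z - 1) = d) :
    ‖z‖ ^ (2 * m + 2) * (‖z‖ ^ 2 - 2 * ‖z‖ * cos (Complex.arg z) + 1) = d ^ 2 := by
  have h1 := congrArg Complex.normSq h
  rw [map_mul, map_pow, Complex.normSq_ofReal, Complex.normSq_eq_norm_sq z] at h1
  have h2 : Complex.normSq (z - 1) = ‖z‖ ^ 2 - 2 * ‖z‖ * cos (Complex.arg z) + 1 := by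
    rw [mul_assoc, Complex.norm_mul_cos_arg, ← Complex.normSq_eq_norm_sq,
      Complex.normSq_apply, Complex.normSq_apply]
    simp
    ring
  rw [← h2, pow_two d, ← h1, ← pow_mul]
  ring

lemma sec_arg (m : ℕ) (d : ℝ) (hd : 0 < d) (z : ℂ) (h : z ^ (m + 1) * (z - 1) = d)
    (h0 : 0 < Complex.arg z) (h1 : Complex.arg z < π) : π ≤ (m + 1) * Complex.arg z := by
  by_contra! hlt
  have hz : z ≠ 0 := by
    rintro rfl
    simp at h0
  have hr : 0 < ‖z‖ := norm_pos_iff.2 hz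
  have him : 0 < z.im := by
    rw [← Complex.norm_mul_sin_arg z]
    exact mul_pos hr (sin_pos_of_pos_of_lt_pi h0 h1)
  have hzn : 0 < (z ^ (m + 1)).im := by
    have e : z ^ (m + 1) = ((‖z‖ ^ (m + 1) : ℝ) : ℂ) *
        (Complex.cos ((((m + 1) * Complex.arg z : ℝ)) : ℂ)
          + Complex.sin ((((m + 1) * Complex.arg z : ℝ)) : ℂ) * Complex.I) := by
      conv_lhs => rw [← Complex.norm_mul_cos_add_sin_mul_I z, mul_pow,
        Complex.cos_add_sin_mul_I_pow]
      push_cast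
      rfl
    rw [e, Complex.im_ofReal_mul, ← Complex.ofReal_cos, ← Complex.ofReal_sin]
    simp only [Complex.add_im, Complex.ofReal_im, Complex.mul_im, Complex.ofReal_re,
      Complex.I_im, Complex.I_re]
    have : 0 < sin ((m + 1) * Complex.arg z) := sin_pos_of_pos_of_lt_pi (by positivity) hlt
    have : 0 < ‖z‖ ^ (m + 1) * sin ((m + 1) * Complex.arg z) := by positivity
    linarith
  set w := z ^ (m + 1)
  have hre := congrArg Complex.re h
  have hi := congrArg Complex.im h
  simp at hre hi
  have key : (w.re * w.re + w.im * w.im) * z.im = -(d * w.im) := by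
    linear_combination w.re * hi - w.im * hre
  nlinarith [mul_pos hd hzn, mul_nonneg (mul_self_nonneg w.re) him.le,
    mul_pos (mul_pos hzn hzn) him]

theorem secondary (q : ℕ) (hq : 2 ≤ q) (d : ℝ) (hd : 0 < d)
    (z' z'' : ℂ)
    (hz' : z' ^ q - z' ^ (q - 1) - (d : ℂ) = 0)
    (hz'' : z'' ^ q - z'' ^ (q - 1) - (d : ℂ) = 0)
    (h1 : 0 ≤ Complex.arg z') (h2 : Complex.arg z' < Complex.arg z'')
    (h3 : Complex.arg z'' ≤ π) :
    ‖z''‖ < ‖z'‖ := by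
  obtain ⟨m, rfl⟩ : ∃ m, q = m + 2 := ⟨q - 2, by omega⟩
  have e' : z' ^ (m + 1) * (z' - 1) = d := by
    rw [show m + 2 - 1 = m + 1 by omega] at hz'
    linear_combination hz'
  have e'' : z'' ^ (m + 1) * (z'' - 1) = d := by
    rw [show m + 2 - 1 = m + 1 by omega] at hz''
    linear_combination hz''
  have v' := sec_val m d z' e'
  have v'' := sec_val m d z'' e''
  by_contra! hle
  have hz0 : z' ≠ 0 := by
    rintro rfl
    have : (d : ℂ) = 0 := by rw [← e']; simp
    exact hd.ne' (by exact_mod_cast this)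
  have hr : 0 < ‖z'‖ := norm_pos_iff.2 hz0
  have hcos : cos (Complex.arg z'') < cos (Complex.arg z') := cos_lt_cos_of_nonneg_of_le_pi h1 h3 h2
  have hm : (0 : ℝ) ≤ m := Nat.cast_nonneg m
  have hc : cos (Complex.arg z'') ≤ 0 ∨
      (2 * ((m : ℝ) + 1) + 1) ^ 2 * cos (Complex.arg z'') ^ 2 ≤ 4 * (m + 1) * (m + 2) := by
    by_cases hpi : π / 2 ≤ Complex.arg z''
    · left
      exact cos_nonpos_of_pi_div_two_le_of_le hpi (by linarith [pi_pos])
    · right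
      push Not at hpi
      have ha := sec_arg m d hd z'' e'' (by linarith) (by linarith [pi_pos])
      have hj := mul_le_sin (x := Complex.arg z'') (by linarith) hpi.le
      have hs : 2 ≤ (m + 1) * sin (Complex.arg z'') := by
        calc (2 : ℝ) = 2 / π * π := by field_simp
          _ ≤ 2 / π * ((m + 1) * Complex.arg z'') := by gcongr
          _ = (m + 1) * (2 / π * Complex.arg z'') := by ring
          _ ≤ _ := by gcongr
      have hs0 : 0 ≤ sin (Complex.arg z'') := by
        apply sin_nonneg_of_nonneg_of_le_pi <;> linarith
      rw [cos_sq']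
      have : 1 ≤ (2 * ((m : ℝ) + 1) + 1) * sin (Complex.arg z'') := by nlinarith
      nlinarith
  have hmono := sec_mono m _ hc (Set.mem_Ici.2 hr.le) (Set.mem_Ici.2 (norm_nonneg z'')) hle
  simp only at hmono
  rw [v'', ← v'] at hmono
  have := le_of_mul_le_mul_left hmono (by positivity)
  nlinarith
end

section
/- Let q ≥ 1 and let z_0, …, z_{q−1} be pairwise distinct complex numbers. Let V be the q×q Vandermonde matrix with entries V_{j,i} = z_i^j for 0 ≤ j, i ≤ q−1, which is invertible, and for a q×q complex matrix A = (a_{j,i}) define ‖A‖ := max_j Σ_i |a_{j,i}| (maximum absolute row sum). Then ‖V^{−1}‖ ≤ max_{0 ≤ j ≤ q−1} ∏_{i ≠ j} (1 + |z_i|)/|z_j − z_i|. -/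
open Finset

lemma aux_step (p : Polynomial ℂ) (B : ℝ) (hp : ∀ N, ∑ n ∈ Finset.range N, ‖p.coeff n‖ ≤ B)
    (x y : ℂ) (N : ℕ) :
    ∑ n ∈ Finset.range N, ‖(Lagrange.basisDivisor x y * p).coeff n‖ ≤
      (1 + ‖y‖) / ‖x - y‖ * B := by
  have h1 : ∑ n ∈ Finset.range N, ‖(Polynomial.X * p).coeff n‖ ≤ B := by
    cases N with
    | zero => simpa using hp 0
    | succ m =>
      rw [Finset.sum_range_succ']
      simpa [Polynomial.coeff_X_mul] using hp m
  have h2 : ∀ n, ‖(Lagrange.basisDivisor x y * p).coeff n‖ ≤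
      ‖x - y‖⁻¹ * (‖(Polynomial.X * p).coeff n‖ + ‖y‖ * ‖p.coeff n‖) := by
    intro n
    rw [Lagrange.basisDivisor, mul_assoc, Polynomial.coeff_C_mul, norm_mul, norm_inv, sub_mul,
      Polynomial.coeff_sub, Polynomial.coeff_C_mul]
    gcongr
    refine (norm_sub_le _ _).trans ?_
    rw [norm_mul]
  calc _ ≤ ∑ n ∈ Finset.range N,
        ‖x - y‖⁻¹ * (‖(Polynomial.X * p).coeff n‖ + ‖y‖ * ‖p.coeff n‖) :=
        Finset.sum_le_sum fun n _ => h2 n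
    _ = ‖x - y‖⁻¹ * (∑ n ∈ Finset.range N, ‖(Polynomial.X * p).coeff n‖
          + ‖y‖ * ∑ n ∈ Finset.range N, ‖p.coeff n‖) := by
        rw [← Finset.mul_sum, Finset.sum_add_distrib, Finset.mul_sum]
    _ ≤ ‖x - y‖⁻¹ * (B + ‖y‖ * B) := by
        gcongr
        exact hp N
    _ = _ := by ring

lemma aux_prod {ι : Type*} (s : Finset ι) (z : ι → ℂ) (x : ℂ) (N : ℕ) :
    ∑ n ∈ Finset.range N, ‖(∏ i ∈ s, Lagrange.basisDivisor x (z i)).coeff n‖ ≤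
      ∏ i ∈ s, (1 + ‖z i‖) / ‖x - z i‖ := by
  classical
  induction s using Finset.induction_on generalizing N with
  | empty =>
    cases N with
    | zero => simp
    | succ m =>
      rw [Finset.sum_range_succ']
      simp [Polynomial.coeff_one]
  | insert a s ha ih =>
    rw [Finset.prod_insert ha, Finset.prod_insert ha]
    exact aux_step _ _ ih _ _ _

theorem vandermonde_inverse_norm (q : ℕ) (hq : 0 < q) (z : Fin q → ℂ)
    (hz : Function.Injective z) :
    IsUnit (Matrix.of (fun j i : Fin q => z i ^ (j : ℕ))).det ∧
    (Finset.univ.sup' (⟨⟨0, hq⟩, Finset.mem_univ _⟩ : (Finset.univ : Finset (Fin q)).Nonempty)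
        (fun j : Fin q =>
          ∑ i : Fin q, ‖(Matrix.of (fun j i : Fin q => z i ^ (j : ℕ)))⁻¹ j i‖) ≤
      Finset.univ.sup' (⟨⟨0, hq⟩, Finset.mem_univ _⟩ : (Finset.univ : Finset (Fin q)).Nonempty)
        (fun j : Fin q =>
          ∏ i ∈ Finset.univ.erase j,
            (1 + ‖z i‖) / ‖z j - z i‖)) := by
  have hW : (Matrix.of fun j i : Fin q => (Lagrange.basis Finset.univ z j).coeff (i : ℕ)) *
      (Matrix.of (fun j i : Fin q => z i ^ (j : ℕ))) = 1 := by
    ext j k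
    have hdeg : (Lagrange.basis Finset.univ z j).natDegree < q := by
      rw [Lagrange.natDegree_basis hz.injOn (Finset.mem_univ j), Finset.card_univ,
        Fintype.card_fin]
      omega
    simp only [Matrix.mul_apply, Matrix.of_apply]
    rw [Fin.sum_univ_eq_sum_range
      (fun n => (Lagrange.basis Finset.univ z j).coeff n * z k ^ n) q,
      ← Polynomial.eval_eq_sum_range' hdeg]
    by_cases h : j = k
    · subst h
      rw [Lagrange.eval_basis_self hz.injOn (Finset.mem_univ j), Matrix.one_apply_eq]
    · rw [Lagrange.eval_basis_of_ne h (Finset.mem_univ k), Matrix.one_apply_ne h]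
  refine ⟨Matrix.isUnit_det_of_left_inverse hW, ?_⟩
  rw [Matrix.inv_eq_left_inv hW]
  apply Finset.sup'_mono_fun
  intro j _
  simp only [Matrix.of_apply]
  rw [Fin.sum_univ_eq_sum_range (fun n => ‖(Lagrange.basis Finset.univ z j).coeff n‖) q]
  exact aux_prod _ _ _ _
end
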